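/- Let B₁,…,B_m be symmetric real n×n matrices. Then Σ_{α,β=1}^m ‖[B_α,B_β]‖² + Σ_{α,β=1}^m ⟨B_α,B_β⟩² ≤ (3/2)(Σ_{α=1}^m ‖B_α‖²)². -/

import Mathlib

open Matrix

noncomputable def frobInner {n : ℕ} (A B : Matrix (Fin n) (Fin n) ℝ) : ℝ :=
  (Aᵀ * B).trace

noncomputable def frobSq {n : ℕ} (A : Matrix (Fin n) (Fin n) ℝ) : ℝ :=
  frobInner A A

def mcomm {n : ℕ} (A B : Matrix (Fin n) (Fin n) ℝ) : Matrix (Fin n) (Fin n) ℝ :=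
  A * B - B * A

theorem frobInner_eq {n : ℕ} (A B : Matrix (Fin n) (Fin n) ℝ) :
    frobInner A B = ∑ i, ∑ j, A i j * B i j := by
  unfold frobInner
  simp only [Matrix.trace, Matrix.diag, Matrix.mul_apply, Matrix.transpose_apply]
  exact Finset.sum_comm

theorem frobSq_eq {n : ℕ} (A : Matrix (Fin n) (Fin n) ℝ) :
    frobSq A = ∑ i, ∑ j, (A i j) ^ 2 := by
  unfold frobSq
  rw [frobInner_eq]
  simp only [sq]

theorem frobSq_nonneg {n : ℕ} (A : Matrix (Fin n) (Fin n) ℝ) : 0 ≤ frobSq A := by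
  rw [frobSq_eq]; positivity

theorem symm_diag {n : ℕ} (A : Matrix (Fin n) (Fin n) ℝ) (hA : A.IsSymm) :
    ∃ (U : Matrix (Fin n) (Fin n) ℝ) (d : Fin n → ℝ), Uᵀ * U = 1 ∧ U * Uᵀ = 1 ∧
      Uᵀ * A * U = Matrix.diagonal d := by
  have hH : A.IsHermitian := by
    rw [Matrix.IsHermitian, Matrix.conjTranspose_eq_transpose_of_trivial]; exact hA
  have h1 := Unitary.coe_star_mul_self hH.eigenvectorUnitary
  have h2 := Unitary.coe_mul_star_self hH.eigenvectorUnitary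
  have h3 := hH.conjStarAlgAut_star_eigenvectorUnitary
  rw [Unitary.conjStarAlgAut_star_apply] at h3
  simp only [Matrix.star_eq_conjTranspose, Matrix.conjTranspose_eq_transpose_of_trivial] at h1 h2 h3
  exact ⟨_, _, h1, h2, h3⟩

theorem frobInner_conj {n : ℕ} (U X Y : Matrix (Fin n) (Fin n) ℝ) (h : U * Uᵀ = 1) :
    frobInner (Uᵀ * X * U) (Uᵀ * Y * U) = frobInner X Y := by
  unfold frobInner
  have : (Uᵀ * X * U)ᵀ * (Uᵀ * Y * U) = Uᵀ * (Xᵀ * Y * U) := by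
    simp only [Matrix.transpose_mul, Matrix.transpose_transpose]
    calc _ = Uᵀ * Xᵀ * (U * Uᵀ) * Y * U := by simp only [Matrix.mul_assoc]
      _ = _ := by rw [h]; simp only [Matrix.mul_assoc, Matrix.one_mul]
  rw [this, Matrix.trace_mul_comm, Matrix.mul_assoc, h, Matrix.mul_one]

theorem mcomm_conj {n : ℕ} (U X Y : Matrix (Fin n) (Fin n) ℝ) (h : U * Uᵀ = 1) :
    mcomm (Uᵀ * X * U) (Uᵀ * Y * U) = Uᵀ * mcomm X Y * U := by
  have key : ∀ X Y : Matrix (Fin n) (Fin n) ℝ,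
      (Uᵀ * X * U) * (Uᵀ * Y * U) = Uᵀ * (X * Y) * U := by
    intro X Y
    calc _ = Uᵀ * X * (U * Uᵀ) * Y * U := by simp only [Matrix.mul_assoc]
      _ = _ := by rw [h]; simp only [Matrix.mul_assoc, Matrix.one_mul]
  unfold mcomm
  rw [key, key, Matrix.mul_sub, Matrix.sub_mul]

/-- Laplacian-type bound: the sum of the excesses of squared gaps over `p` is at most `p`. -/
theorem edge_bound {n : ℕ} (d : Fin n → ℝ) (S : Finset (Fin n × Fin n))
    (hS : ∀ e ∈ S, d e.2 < d e.1) :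
    ∑ e ∈ S, (d e.1 - d e.2) ^ 2 ≤ (∑ i, d i ^ 2) * (1 + S.card) := by
  set p := ∑ i, d i ^ 2 with hp
  set T := ∑ e ∈ S, (d e.1 - d e.2) ^ 2 with hT
  have hp0 : 0 ≤ p := by positivity
  have hT0 : 0 ≤ T := by positivity
  let N : Fin n × Fin n → Fin n → ℝ := fun e k =>
    (if k = e.1 then 1 else 0) - (if k = e.2 then 1 else 0)
  have hN : ∀ e k, N e k = (if k = e.1 then 1 else 0) - (if k = e.2 then 1 else 0) :=
    fun _ _ => rfl
  have h1 : T = ∑ k, d k * ∑ e ∈ S, (d e.1 - d e.2) * N e k := by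
    simp only [Finset.mul_sum]
    rw [Finset.sum_comm, hT]
    refine Finset.sum_congr rfl fun e _ => ?_
    have : ∀ k, d k * ((d e.1 - d e.2) * N e k)
        = (d e.1 - d e.2) * ((if k = e.1 then d k else 0) - (if k = e.2 then d k else 0)) := by
      intro k; rw [hN]; split_ifs <;> ring
    simp only [this, ← Finset.mul_sum, Finset.sum_sub_distrib, Finset.sum_ite_eq',
      Finset.mem_univ, if_true]
    ring
  have h2 : ∑ k, (∑ e ∈ S, (d e.1 - d e.2) * N e k) ^ 2
      = ∑ e ∈ S, ∑ f ∈ S, (d e.1 - d e.2) * (d f.1 - d f.2) * ∑ k, N e k * N f k := by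
    simp only [sq, Finset.sum_mul_sum]
    simp only [Finset.mul_sum]
    rw [Finset.sum_comm]
    refine Finset.sum_congr rfl fun e _ => ?_
    rw [Finset.sum_comm]
    refine Finset.sum_congr rfl fun f _ => Finset.sum_congr rfl fun k _ => by ring
  have h3 : ∀ e ∈ S, ∀ f ∈ S, ∑ k, N e k * N f k ≤ 1 + if e = f then 1 else 0 := by
    intro e he f hf
    have he' := hS e he
    have hf' := hS f hf
    have h0 : ∑ k, N e k * N f k = N f e.1 - N f e.2 := by
      have : ∀ k, N e k * N f k
          = (if k = e.1 then N f k else 0) - (if k = e.2 then N f k else 0) := by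
        intro k; rw [hN e]; split_ifs <;> ring
      simp only [this, Finset.sum_sub_distrib, Finset.sum_ite_eq', Finset.mem_univ, if_true]
    rw [h0, hN, hN]
    obtain ⟨e1, e2⟩ := e
    obtain ⟨f1, f2⟩ := f
    simp only [Prod.mk.injEq] at *
    clear h0 h1 h2 hT hp hT0 hp0 hN
    split_ifs <;> first | (norm_num; done) | (exfalso; tauto)
  have h4 : ∑ k, (∑ e ∈ S, (d e.1 - d e.2) * N e k) ^ 2 ≤ (1 + S.card) * T := by
    rw [h2]
    have : ∑ e ∈ S, ∑ f ∈ S, (d e.1 - d e.2) * (d f.1 - d f.2) * ∑ k, N e k * N f k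
        ≤ ∑ e ∈ S, ∑ f ∈ S, ((d e.1 - d e.2) * (d f.1 - d f.2) +
          if e = f then (d e.1 - d e.2) * (d f.1 - d f.2) else 0) := by
      refine Finset.sum_le_sum fun e he => Finset.sum_le_sum fun f hf => ?_
      have := h3 e he f hf
      have h5 : 0 ≤ (d e.1 - d e.2) * (d f.1 - d f.2) :=
        mul_nonneg (sub_nonneg.2 (hS e he).le) (sub_nonneg.2 (hS f hf).le)
      refine (mul_le_mul_of_nonneg_left this h5).trans (le_of_eq ?_)
      split_ifs <;> ring
    refine this.trans ?_
    simp only [Finset.sum_add_distrib, Finset.sum_ite_eq]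
    rw [← Finset.sum_mul_sum]
    have h6 : ∑ e ∈ S, (if e ∈ S then (d e.1 - d e.2) * (d e.1 - d e.2) else 0) = T := by
      refine Finset.sum_congr rfl fun e he => ?_
      rw [if_pos he]; ring
    have h7 := sq_sum_le_card_mul_sum_sq (s := S) (f := fun e => d e.1 - d e.2)
    rw [h6]
    nlinarith [h7]
  have h5 : T ^ 2 ≤ p * ((1 + S.card) * T) := by
    calc T ^ 2 ≤ p * ∑ k, (∑ e ∈ S, (d e.1 - d e.2) * N e k) ^ 2 := by
          nth_rewrite 1 [h1]
          exact Finset.sum_mul_sq_le_sq_mul_sq _ _ _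
      _ ≤ _ := mul_le_mul_of_nonneg_left h4 hp0
  rcases hT0.eq_or_lt with h | h
  · rw [← h]; exact mul_nonneg hp0 (add_nonneg zero_le_one (Nat.cast_nonneg _))
  · by_contra hc
    push Not at hc
    nlinarith

/-- Bessel-type bound for an orthogonal family. -/
theorem bessel {ι κ : Type*} [DecidableEq ι] [Fintype κ] (s : Finset ι) (v : ι → κ → ℝ) (M : ℝ)
    (horth : ∀ a ∈ s, ∀ b ∈ s, a ≠ b → ∑ k, v a k * v b k = 0)
    (hM : ∀ a ∈ s, ∑ k, v a k * v a k ≤ M) (hM0 : 0 ≤ M) (F : κ → ℝ) :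
    ∑ a ∈ s, (∑ k, v a k * F k) ^ 2 ≤ M * ∑ k, F k ^ 2 := by
  set c : ι → ℝ := fun a => ∑ k, v a k * F k with hc
  set T := ∑ a ∈ s, c a ^ 2 with hT
  change T ≤ _
  have hT0 : 0 ≤ T := by positivity
  have h1 : T = ∑ k, (∑ a ∈ s, c a * v a k) * F k := by
    simp only [Finset.sum_mul]
    rw [Finset.sum_comm, hT]
    refine Finset.sum_congr rfl fun a _ => ?_
    simp only [mul_assoc, ← Finset.mul_sum]
    rw [sq]
  have h2 : ∑ k, (∑ a ∈ s, c a * v a k) ^ 2 ≤ M * T := by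
    have : ∑ k, (∑ a ∈ s, c a * v a k) ^ 2
        = ∑ a ∈ s, ∑ b ∈ s, c a * c b * ∑ k, v a k * v b k := by
      simp only [sq, Finset.sum_mul_sum]
      simp only [Finset.mul_sum]
      rw [Finset.sum_comm]
      refine Finset.sum_congr rfl fun e _ => ?_
      rw [Finset.sum_comm]
      refine Finset.sum_congr rfl fun f _ => Finset.sum_congr rfl fun k _ => by ring
    rw [this, hT, Finset.mul_sum]
    refine Finset.sum_le_sum fun a ha => ?_
    rw [Finset.sum_eq_single_of_mem a ha]
    · nlinarith [hM a ha, sq_nonneg (c a)]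
    · intro b hb hba
      rw [horth a ha b hb hba.symm, mul_zero]
  have h3 : T ^ 2 ≤ (M * T) * ∑ k, F k ^ 2 := by
    calc T ^ 2 ≤ (∑ k, (∑ a ∈ s, c a * v a k) ^ 2) * ∑ k, F k ^ 2 := by
          nth_rewrite 1 [h1]
          exact Finset.sum_mul_sq_le_sq_mul_sq _ _ _
      _ ≤ _ := mul_le_mul_of_nonneg_right h2 (by positivity)
  rcases hT0.eq_or_lt with h | h
  · rw [← h]; positivity
  · by_contra hc
    push Not at hc
    nlinarith

theorem key_diag {ι : Type*} [DecidableEq ι] {n : ℕ} (d : Fin n → ℝ) (s : Finset ι)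
    (B : ι → Matrix (Fin n) (Fin n) ℝ) (hsymm : ∀ a, (B a).IsSymm)
    (horth : ∀ a ∈ s, ∀ b ∈ s, a ≠ b → frobInner (B a) (B b) = 0)
    (M : ℝ) (hM0 : 0 ≤ M) (hM : ∀ a ∈ s, frobSq (B a) ≤ M) :
    ∑ a ∈ s, frobSq (mcomm (Matrix.diagonal d) (B a)) ≤
      (∑ i, d i ^ 2) * (∑ a ∈ s, frobSq (B a) + M) := by
  set p := ∑ i, d i ^ 2 with hp
  have hp0 : 0 ≤ p := by positivity
  let v : Fin n → Fin n → ℝ := fun i j => ∑ a ∈ s, (B a i j) ^ 2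
  have hv0 : ∀ i j, 0 ≤ v i j := fun i j => by positivity
  have hv : ∀ i j, i ≠ j → v i j ≤ M / 2 := by
    intro i j hij
    have hb := bessel s (fun a (k : Fin n × Fin n) => B a k.1 k.2) M
      (by intro a ha b hb hab
          have := horth a ha b hb hab
          rw [frobInner_eq] at this
          rw [Fintype.sum_prod_type]; exact this)
      (by intro a ha
          have := hM a ha
          unfold frobSq at this
          rw [frobInner_eq] at this
          rw [Fintype.sum_prod_type]; exact this) hM0
      (fun k => (if k = (i, j) then 1 else 0) + (if k = (j, i) then 1 else 0))
    have hne : (i, j) ≠ (j, i) := by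
      intro h; exact hij (Prod.mk.inj h).1
    have h1 : ∀ a, ∑ k : Fin n × Fin n, B a k.1 k.2 *
        ((if k = (i, j) then 1 else 0) + (if k = (j, i) then 1 else 0)) = 2 * B a i j := by
      intro a
      have : B a j i = B a i j := (hsymm a).apply i j
      simp only [mul_add, mul_ite, mul_one, mul_zero, Finset.sum_add_distrib, Finset.sum_ite_eq',
        Finset.mem_univ, if_true, this]
      ring
    have h2 : ∑ k : Fin n × Fin n,
        ((if k = (i, j) then (1 : ℝ) else 0) + (if k = (j, i) then 1 else 0)) ^ 2 = 2 := by
      have : ∀ k : Fin n × Fin n,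
          ((if k = (i, j) then (1 : ℝ) else 0) + (if k = (j, i) then 1 else 0)) ^ 2
          = (if k = (i, j) then (1 : ℝ) else 0) + (if k = (j, i) then 1 else 0) := by
        intro k
        by_cases h : k = (i, j)
        · subst h; simp [hne]
        · simp [h]
      simp only [this, Finset.sum_add_distrib, Finset.sum_ite_eq', Finset.mem_univ, if_true]
      norm_num
    simp only [h1, h2, mul_pow, ← Finset.mul_sum] at hb
    change 2 ^ 2 * v i j ≤ _ at hb
    linarith
  have hl : ∑ a ∈ s, frobSq (mcomm (Matrix.diagonal d) (B a))
      = ∑ i, ∑ j, (d i - d j) ^ 2 * v i j := by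
    simp only [frobSq_eq, v, Finset.mul_sum]
    rw [Finset.sum_comm]
    refine Finset.sum_congr rfl fun i _ => ?_
    rw [Finset.sum_comm]
    refine Finset.sum_congr rfl fun j _ => Finset.sum_congr rfl fun a _ => ?_
    simp only [mcomm, Matrix.sub_apply, Matrix.diagonal_mul, Matrix.mul_diagonal]
    ring
  have hr : ∑ a ∈ s, frobSq (B a) = ∑ i, ∑ j, v i j := by
    simp only [frobSq_eq, v]
    rw [Finset.sum_comm]
    refine Finset.sum_congr rfl fun i _ => ?_
    rw [Finset.sum_comm]
  let h : Fin n → Fin n → ℝ := fun i j =>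
    if d j < d i ∧ p < (d i - d j) ^ 2 then (d i - d j) ^ 2 - p else 0
  have hh : ∑ i, ∑ j, h i j ≤ p := by
    have := edge_bound d
      (Finset.univ.filter fun e : Fin n × Fin n => d e.2 < d e.1 ∧ p < (d e.1 - d e.2) ^ 2)
      (by intro e he; exact (Finset.mem_filter.1 he).2.1)
    rw [← hp] at this
    have h2 : ∑ i, ∑ j, h i j = ∑ e ∈ Finset.univ.filter
        (fun e : Fin n × Fin n => d e.2 < d e.1 ∧ p < (d e.1 - d e.2) ^ 2),
        ((d e.1 - d e.2) ^ 2 - p) := by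
      rw [Finset.sum_filter, Fintype.sum_prod_type]
    rw [h2, Finset.sum_sub_distrib, Finset.sum_const, nsmul_eq_mul]
    linarith
  have hij : ∀ i j, (d i - d j) ^ 2 * v i j ≤ p * v i j + M / 2 * (h i j + h j i) := by
    intro i j
    have hn : ∀ i j, 0 ≤ h i j := by
      intro i j
      simp only [h]
      split_ifs with hc
      · linarith [hc.2]
      · exact le_rfl
    by_cases hc : p < (d i - d j) ^ 2
    · have hne : i ≠ j := by
        rintro rfl
        simp at hc; linarith
      have hle : (d i - d j) ^ 2 - p ≤ h i j + h j i := by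
        rcases lt_trichotomy (d i) (d j) with hlt | heq | hgt
        · have : h j i = (d j - d i) ^ 2 - p := by
            simp only [h]; rw [if_pos ⟨hlt, by nlinarith⟩]
          have := hn i j
          nlinarith
        · rw [heq] at hc; simp at hc; linarith
        · have : h i j = (d i - d j) ^ 2 - p := by
            simp only [h]; rw [if_pos ⟨hgt, hc⟩]
          have := hn j i
          nlinarith
      have h1 := mul_le_mul_of_nonneg_left (hv i j hne) (sub_pos.2 hc).le
      have h2 := mul_le_mul_of_nonneg_left hle (show 0 ≤ M / 2 by linarith)
      linarith
    · push Not at hc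
      have h1 := mul_le_mul_of_nonneg_right hc (hv0 i j)
      have h2 : 0 ≤ M / 2 * (h i j + h j i) :=
        mul_nonneg (by linarith) (add_nonneg (hn _ _) (hn _ _))
      linarith
  rw [hl, hr]
  calc _ ≤ ∑ i, ∑ j, (p * v i j + M / 2 * (h i j + h j i)) :=
        Finset.sum_le_sum fun i _ => Finset.sum_le_sum fun j _ => hij i j
    _ = p * ∑ i, ∑ j, v i j + M / 2 * (∑ i, ∑ j, h i j + ∑ i, ∑ j, h j i) := by
        simp only [Finset.sum_add_distrib, ← Finset.mul_sum]
    _ = p * ∑ i, ∑ j, v i j + M * ∑ i, ∑ j, h i j := by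
        rw [Finset.sum_comm (f := fun i j => h j i)]; ring
    _ ≤ _ := by nlinarith

theorem key_lemma {ι : Type*} [DecidableEq ι] {n : ℕ} (A : Matrix (Fin n) (Fin n) ℝ)
    (hA : A.IsSymm) (s : Finset ι)
    (B : ι → Matrix (Fin n) (Fin n) ℝ) (hsymm : ∀ a, (B a).IsSymm)
    (horth : ∀ a ∈ s, ∀ b ∈ s, a ≠ b → frobInner (B a) (B b) = 0)
    (M : ℝ) (hM0 : 0 ≤ M) (hM : ∀ a ∈ s, frobSq (B a) ≤ M) :
    ∑ a ∈ s, frobSq (mcomm A (B a)) ≤ frobSq A * (∑ a ∈ s, frobSq (B a) + M) := by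
  obtain ⟨U, d, -, h2, h3⟩ := symm_diag A hA
  have hsq : ∀ X, frobSq (Uᵀ * X * U) = frobSq X := fun X => frobInner_conj U X X h2
  have := key_diag d s (fun a => Uᵀ * B a * U)
    (by intro a
        have := hsymm a
        rw [Matrix.IsSymm] at this ⊢
        simp only [Matrix.transpose_mul, Matrix.transpose_transpose, this, Matrix.mul_assoc])
    (by intro a ha b hb hab
        simp only [frobInner_conj U _ _ h2]; exact horth a ha b hb hab) M hM0
    (by intro a ha; simp only [hsq]; exact hM a ha)
  have hd : ∑ i, d i ^ 2 = frobSq A := by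
    rw [← hsq A, h3, frobSq_eq]
    refine Finset.sum_congr rfl fun i _ => ?_
    rw [Finset.sum_eq_single i]
    · simp
    · intro j _ hj; simp [Matrix.diagonal_apply_ne' _ hj]
    · simp
  rw [hd] at this
  simpa only [← h3, mcomm_conj U _ _ h2, hsq] using this

theorem mcomm_self_sq {n : ℕ} (A : Matrix (Fin n) (Fin n) ℝ) : frobSq (mcomm A A) = 0 := by
  simp [frobSq_eq, mcomm]

theorem mcomm_swap_sq {n : ℕ} (A B : Matrix (Fin n) (Fin n) ℝ) :
    frobSq (mcomm A B) = frobSq (mcomm B A) := by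
  simp only [frobSq_eq, mcomm, Matrix.sub_apply]
  refine Finset.sum_congr rfl fun i _ => Finset.sum_congr rfl fun j _ => by ring

theorem orth_case {ι : Type*} [DecidableEq ι] {n : ℕ} (s : Finset ι)
    (B : ι → Matrix (Fin n) (Fin n) ℝ) (hsymm : ∀ a, (B a).IsSymm)
    (horth : ∀ a b, a ≠ b → frobInner (B a) (B b) = 0) :
    ∃ E O : ℝ, 0 ≤ E ∧ 0 ≤ O ∧ E + O = ∑ a ∈ s, frobSq (B a) ∧ (∀ a ∈ s, frobSq (B a) ≤ E) ∧
      ∑ a ∈ s, ∑ b ∈ s, frobSq (mcomm (B a) (B b)) + ∑ a ∈ s, frobSq (B a) ^ 2 ≤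
        (∑ a ∈ s, frobSq (B a)) ^ 2 + 2 * (E * O) := by
  induction s using Finset.induction_on_max_value (fun a => frobSq (B a)) with
  | empty => exact ⟨0, 0, by simp⟩
  | insert a s ha hmax ih =>
    obtain ⟨E, O, hE, hO, hEO, hbd, hin⟩ := ih
    have h0 := frobSq_nonneg (B a)
    refine ⟨O + frobSq (B a), E, by linarith, hE, ?_, ?_, ?_⟩
    · rw [Finset.sum_insert ha, ← hEO]; ring
    · intro b hb
      rcases Finset.mem_insert.1 hb with rfl | hb
      · linarith
      · have := hmax b hb
        linarith
    · have hk := key_lemma (B a) (hsymm a) s B hsymm (fun a _ b _ hab => horth a b hab) E hE hbd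
      simp only [Finset.sum_insert ha, Finset.sum_add_distrib, mcomm_self_sq]
      have hsw : ∑ b ∈ s, frobSq (mcomm (B b) (B a)) = ∑ b ∈ s, frobSq (mcomm (B a) (B b)) :=
        Finset.sum_congr rfl fun b _ => mcomm_swap_sq _ _
      rw [hsw]
      nlinarith

/-- Orthogonal mixing preserves sums of squares. -/
theorem mix_sq {m : ℕ} (U : Matrix (Fin m) (Fin m) ℝ) (h : U * Uᵀ = 1) (x : Fin m → ℝ) :
    ∑ c, (∑ a, U a c * x a) ^ 2 = ∑ a, x a ^ 2 := by
  have h1 : ∀ a b, ∑ c, U a c * U b c = if a = b then 1 else 0 := by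
    intro a b
    have := congrFun (congrFun h a) b
    simpa [Matrix.mul_apply, Matrix.one_apply] using this
  have : ∑ c, (∑ a, U a c * x a) ^ 2 = ∑ a, ∑ b, x a * x b * ∑ c, U a c * U b c := by
    simp only [sq, Finset.sum_mul_sum]
    simp only [Finset.mul_sum]
    rw [Finset.sum_comm]
    refine Finset.sum_congr rfl fun e _ => ?_
    rw [Finset.sum_comm]
    refine Finset.sum_congr rfl fun f _ => Finset.sum_congr rfl fun k _ => by ring
  rw [this]
  simp [h1, sq]

theorem mix_frob {m n : ℕ} (U : Matrix (Fin m) (Fin m) ℝ) (h : U * Uᵀ = 1)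
    (X : Fin m → Matrix (Fin n) (Fin n) ℝ) :
    ∑ c, frobSq (∑ a, U a c • X a) = ∑ a, frobSq (X a) := by
  simp only [frobSq_eq, Matrix.sum_apply, Matrix.smul_apply, smul_eq_mul]
  rw [Finset.sum_comm, Finset.sum_comm (s := Finset.univ (α := Fin m))]
  refine Finset.sum_congr rfl fun i _ => ?_
  rw [Finset.sum_comm, Finset.sum_comm (s := Finset.univ (α := Fin m))]
  refine Finset.sum_congr rfl fun j _ => ?_
  exact mix_sq U h _

theorem mcomm_sum_left {m n : ℕ} (u : Fin m → ℝ) (X : Fin m → Matrix (Fin n) (Fin n) ℝ)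
    (Y : Matrix (Fin n) (Fin n) ℝ) :
    mcomm (∑ a, u a • X a) Y = ∑ a, u a • mcomm (X a) Y := by
  simp only [mcomm, Finset.sum_mul, Finset.mul_sum, smul_sub, Finset.sum_sub_distrib,
    Matrix.smul_mul, Matrix.mul_smul]

theorem mcomm_sum_right {m n : ℕ} (u : Fin m → ℝ) (X : Fin m → Matrix (Fin n) (Fin n) ℝ)
    (Y : Matrix (Fin n) (Fin n) ℝ) :
    mcomm Y (∑ a, u a • X a) = ∑ a, u a • mcomm Y (X a) := by
  simp only [mcomm, Finset.sum_mul, Finset.mul_sum, smul_sub, Finset.sum_sub_distrib,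
    Matrix.smul_mul, Matrix.mul_smul]

theorem frobInner_sum {m n : ℕ} (u w : Fin m → ℝ) (X : Fin m → Matrix (Fin n) (Fin n) ℝ) :
    frobInner (∑ a, u a • X a) (∑ b, w b • X b) = ∑ b, (∑ a, u a * frobInner (X a) (X b)) * w b := by
  simp only [frobInner, Matrix.transpose_sum, Matrix.transpose_smul, Finset.mul_sum,
    Finset.sum_mul, Matrix.trace_sum, Matrix.smul_mul, Matrix.mul_smul, Matrix.trace_smul,
    smul_eq_mul]
  refine Finset.sum_congr rfl fun b _ => Finset.sum_congr rfl fun a _ => by ring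

/-- Li–Li inequality. -/
theorem li_li {n m : ℕ} (B : Fin m → Matrix (Fin n) (Fin n) ℝ)
    (hsymm : ∀ α, (B α).IsSymm) :
    (∑ α, ∑ β, frobSq (mcomm (B α) (B β))) +
      (∑ α, ∑ β, (frobInner (B α) (B β)) ^ 2) ≤
      (3 / 2) * (∑ α, frobSq (B α)) ^ 2 := by
  let G : Matrix (Fin m) (Fin m) ℝ := Matrix.of fun a b => frobInner (B a) (B b)
  have hG : G.IsSymm := by
    ext a b
    simp only [G, Matrix.transpose_apply, Matrix.of_apply, frobInner_eq]
    refine Finset.sum_congr rfl fun i _ => Finset.sum_congr rfl fun j _ => by ring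
  obtain ⟨U, d, -, h2, h3⟩ := symm_diag G hG
  let C : Fin m → Matrix (Fin n) (Fin n) ℝ := fun c => ∑ a, U a c • B a
  have hC : ∀ c e, frobInner (C c) (C e) = (Matrix.diagonal d : Matrix (Fin m) (Fin m) ℝ) c e := by
    intro c e
    rw [← h3]
    simp only [C]
    rw [frobInner_sum (fun a => U a c) (fun a => U a e)]
    simp only [Matrix.mul_apply, Matrix.transpose_apply, G, Matrix.of_apply]
  have hCs : ∀ c, (C c).IsSymm := by
    intro c
    simp only [Matrix.IsSymm, C, Matrix.transpose_sum, Matrix.transpose_smul, (hsymm _).eq]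
  obtain ⟨E, O, hE, hO, hEO, -, hin⟩ := orth_case Finset.univ C hCs
    (by intro a b hab; rw [hC, Matrix.diagonal_apply_ne _ hab])
  have e1 : ∑ c, frobSq (C c) = ∑ a, frobSq (B a) := mix_frob U h2 B
  have e2 : ∑ c, ∑ e, frobSq (mcomm (C c) (C e)) = ∑ a, ∑ b, frobSq (mcomm (B a) (B b)) := by
    have : ∀ c, ∑ e, frobSq (mcomm (C c) (C e)) = ∑ b, frobSq (mcomm (C c) (B b)) := by
      intro c
      rw [← mix_frob U h2 (fun b => mcomm (C c) (B b))]
      refine Finset.sum_congr rfl fun e _ => ?_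
      rw [← mcomm_sum_right (fun a => U a e)]
    simp only [this]
    rw [Finset.sum_comm, Finset.sum_comm (f := fun a b => frobSq (mcomm (B a) (B b)))]
    refine Finset.sum_congr rfl fun b _ => ?_
    rw [← mix_frob U h2 (fun a => mcomm (B a) (B b))]
    refine Finset.sum_congr rfl fun e _ => ?_
    rw [← mcomm_sum_left (fun a => U a e)]
  have e3 : ∑ c, frobSq (C c) ^ 2 = ∑ a, ∑ b, (frobInner (B a) (B b)) ^ 2 := by
    have h4 : frobSq G = ∑ a, ∑ b, (frobInner (B a) (B b)) ^ 2 := by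
      rw [frobSq_eq]; rfl
    have h5 : frobSq (Uᵀ * G * U) = frobSq G := frobInner_conj U G G h2
    rw [← h4, ← h5, h3, frobSq_eq]
    refine Finset.sum_congr rfl fun i _ => ?_
    rw [Finset.sum_eq_single i]
    · rw [frobSq, hC]
    · intro j _ hj; simp [Matrix.diagonal_apply_ne' _ hj]
    · simp
  rw [e1, e2, e3] at hin
  rw [e1] at hEO
  rw [← hEO] at hin ⊢
  nlinarith [sq_nonneg (E - O)]
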